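/- Let K ≥ 1, α > 0, and take α_k = α/√K for all 1 ≤ k ≤ K. Define weights w_k = ∑_{j=k}^{K} α_j β₁^{j−k} and probabilities p_k = w_k / ∑_{t=1}^{K} w_t. Then ∑_{k=1}^{K} p_k·E[F(x^(k))] − F* ≤ (1/(2α√K(1−β₁)))·( n·D∞²·G∞ + α²·G₁/((1−β₁)²·√(1−β₂)) + α³·L·τ²·s/(√K·(1−β₂)) ). -/

import Mathlib

open MeasureTheory Finset

/-- clamping to an interval is a contraction towards points of the interval -/
lemma clamp_sq (y z a b : ℝ) (hz : z ∈ Set.Icc a b) :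
    (min (max y a) b - z)^2 ≤ (y - z)^2 := by
  obtain ⟨h1, h2⟩ := hz
  have hab : a ≤ b := h1.trans h2
  rcases le_total y a with h | h
  · rw [max_eq_right h, min_eq_left hab]; nlinarith
  · rw [max_eq_left h]
    rcases le_total y b with h' | h'
    · rw [min_eq_left h']
    · rw [min_eq_right h']; nlinarith

lemma clamp_mem (y a b : ℝ) (hab : a ≤ b) : min (max y a) b ∈ Set.Icc a b :=
  ⟨le_min (le_max_right _ _) hab, min_le_right _ _⟩

/-- exponential averages of the sparsity indicators -/
noncomputable def uav (β : ℝ) (g : ℕ → ℝ) : ℕ → ℝ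
  | 0 => 0
  | k+1 => β * uav β g k + (1 - β) * (if g (k+1) ≠ 0 then 1 else 0)

lemma uav_mem (β : ℝ) (hβ : β ∈ Set.Ico (0:ℝ) 1) (g : ℕ → ℝ) (k : ℕ) :
    uav β g k ∈ Set.Icc (0:ℝ) 1 := by
  obtain ⟨h0, h1⟩ := hβ
  induction k with
  | zero => simp [uav]
  | succ k ih =>
    obtain ⟨i0, i1⟩ := ih
    simp only [uav]
    constructor
    · split_ifs <;> nlinarith [mul_nonneg h0 i0]
    · split_ifs <;> nlinarith [mul_nonneg h0 i0]

lemma vfacts (β₁ β₂ : ℝ) (hβ₁ : β₁ ∈ Set.Ico (0:ℝ) 1) (hβ₂ : β₂ ∈ Set.Ico (0:ℝ) 1)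
    (g m v vh : ℕ → ℝ) (hm0 : m 0 = 0) (hv0 : v 0 = 0) (hvh0 : vh 0 = 0)
    (hm : ∀ k, m (k+1) = β₁ * m k + (1 - β₁) * g (k+1))
    (hv : ∀ k, v (k+1) = β₂ * v k + (1 - β₂) * (g (k+1))^2)
    (hvh : ∀ k, vh (k+1) = max (vh k) (v (k+1))) (k : ℕ) :
    0 ≤ v k ∧ 0 ≤ vh k ∧ (m k)^2 * (1 - β₂) ≤ vh k * uav β₁ g k := by
  obtain ⟨a0, a1⟩ := hβ₁
  obtain ⟨b0, b1⟩ := hβ₂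
  induction k with
  | zero => simp [hm0, hv0, hvh0]
  | succ k ih =>
    obtain ⟨h1, h2, h3⟩ := ih
    have hvn : 0 ≤ v (k+1) := by
      rw [hv]; nlinarith [mul_nonneg b0 h1, mul_nonneg (sub_nonneg.2 b1.le) (sq_nonneg (g (k+1)))]
    have l1 : vh k ≤ vh (k+1) := by rw [hvh]; exact le_max_left _ _
    have l2 : v (k+1) ≤ vh (k+1) := by rw [hvh]; exact le_max_right _ _
    refine ⟨hvn, h2.trans l1, ?_⟩
    have hu := (uav_mem β₁ ⟨a0, a1⟩ g k).1
    have hgg : (g (k+1))^2 * (1 - β₂) ≤ vh (k+1) * (if g (k+1) ≠ 0 then 1 else 0) := by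
      split_ifs with h
      · rw [hv] at l2; nlinarith [mul_nonneg b0 h1]
      · simp only [not_not] at h; simp [h]
    have hmm : (m k)^2 * (1 - β₂) ≤ vh (k+1) * uav β₁ g k :=
      h3.trans (mul_le_mul_of_nonneg_right l1 hu)
    have hj : (m (k+1))^2 ≤ β₁ * (m k)^2 + (1 - β₁) * (g (k+1))^2 := by
      rw [hm]
      nlinarith [mul_nonneg (mul_nonneg a0 (sub_nonneg.2 a1.le)) (sq_nonneg (m k - g (k+1)))]
    simp only [uav]
    calc (m (k+1))^2 * (1 - β₂) ≤ (β₁ * (m k)^2 + (1 - β₁) * (g (k+1))^2) * (1 - β₂) :=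
          mul_le_mul_of_nonneg_right hj (by linarith)
      _ = β₁ * ((m k)^2 * (1 - β₂)) + (1 - β₁) * ((g (k+1))^2 * (1 - β₂)) := by ring
      _ ≤ β₁ * (vh (k+1) * uav β₁ g k) +
          (1 - β₁) * (vh (k+1) * (if g (k+1) ≠ 0 then 1 else 0)) :=
          add_le_add (mul_le_mul_of_nonneg_left hmm a0)
            (mul_le_mul_of_nonneg_left hgg (by linarith))
      _ = _ := by ring

lemma vbound (β₂ G : ℝ) (hβ₂ : β₂ ∈ Set.Ico (0:ℝ) 1)
    (g v vh : ℕ → ℝ) (hv0 : v 0 = 0) (hvh0 : vh 0 = 0)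
    (hv : ∀ k, v (k+1) = β₂ * v k + (1 - β₂) * (g (k+1))^2)
    (hvh : ∀ k, vh (k+1) = max (vh k) (v (k+1)))
    (hg : ∀ k, |g (k+1)| ≤ G) (k : ℕ) : v k ≤ G^2 ∧ vh k ≤ G^2 := by
  obtain ⟨b0, b1⟩ := hβ₂
  induction k with
  | zero => rw [hv0, hvh0]; exact ⟨sq_nonneg _, sq_nonneg _⟩
  | succ k ih =>
    have h1 : (g (k+1))^2 ≤ G^2 := by
      rw [← sq_abs]; exact pow_le_pow_left₀ (abs_nonneg _) (hg k) 2
    have h2 : v (k+1) ≤ G^2 := by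
      rw [hv]; nlinarith [mul_le_mul_of_nonneg_left ih.1 b0,
        mul_le_mul_of_nonneg_left h1 (sub_nonneg.2 b1.le)]
    exact ⟨h2, by rw [hvh]; exact max_le ih.2 h2⟩

/-- the step bound -/
lemma step_facts (β₂ : ℝ) (hβ₂ : β₂ ∈ Set.Ico (0:ℝ) 1)
    (m vh u : ℝ) (hvh : 0 ≤ vh) (hu : u ∈ Set.Icc (0:ℝ) 1) (hmu : m^2 * (1 - β₂) ≤ vh * u) :
    (m / √vh)^2 ≤ u / (1 - β₂) ∧ |m / √vh| ≤ 1 / √(1 - β₂) ∧ √vh * (m / √vh) = m := by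
  have hb : 0 < 1 - β₂ := by linarith [hβ₂.2]
  have h1 : (m / √vh)^2 ≤ u / (1 - β₂) := by
    rw [div_pow, Real.sq_sqrt hvh]
    rcases hvh.eq_or_lt with h | h
    · rw [← h, div_zero]; exact div_nonneg hu.1 hb.le
    · rw [div_le_div_iff₀ h hb]; linarith
  refine ⟨h1, ?_, ?_⟩
  · apply abs_le_of_sq_le_sq _ (by positivity)
    rw [div_pow 1, Real.sq_sqrt hb.le, one_pow]
    exact h1.trans (div_le_div_of_nonneg_right hu.2 hb.le)
  · rcases hvh.eq_or_lt with h | h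
    · rw [← h] at hmu ⊢
      have : m^2 ≤ 0 := by nlinarith
      have : m = 0 := by nlinarith [pow_eq_zero_iff (n := 2) (a := m) (by norm_num) |>.1 (le_antisymm this (sq_nonneg _))]
      simp [this]
    · field_simp

lemma regret_alg (β : ℝ) (hβ : β ∈ Set.Ico (0:ℝ) 1) (A : ℝ) (hA : 0 ≤ A)
    (h h0 q μ μ0 γ y y' z w w' D c S T : ℝ) (hh : 0 ≤ h) (hh0 : h0 ≤ h) (hq : h * q = μ)
    (hqc : |q| ≤ c) (c1 : (y' - z)^2 ≤ (y - A * q - z)^2) (c2 : (y' - y)^2 ≤ (y - A * q - y)^2)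
    (hμ : μ = β * μ0 + (1 - β) * γ) (hw : w = A + β * w') (hw0 : 0 ≤ w')
    (hw1 : w' ≤ A / (1 - β)) (hD : (y - z)^2 ≤ D^2)
    (ih : 2 * (1 - β) * S - 2 * β * w * μ0 * (y - z) + h0 * (y - z)^2 ≤
      D^2 * h0 + A^2 * ((1 + β) / (1 - β)) * c * T) :
    2 * (1 - β) * (S + w * (γ * (y - z))) - 2 * β * w' * μ * (y' - z) + h * (y' - z)^2 ≤
      D^2 * h + A^2 * ((1 + β) / (1 - β)) * c * (T + |μ|) := by
  obtain ⟨b0, b1⟩ := hβ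
  have hb : 0 < 1 - β := by linarith
  have hc : 0 ≤ c := (abs_nonneg _).trans hqc
  have e1 : h * (y' - z)^2 ≤ h * (y - z)^2 - 2 * A * μ * (y - z) + A^2 * (c * |μ|) := by
    have t1 : μ * q ≤ c * |μ| := by
      calc μ * q ≤ |μ * q| := le_abs_self _
        _ = |q| * |μ| := by rw [abs_mul, mul_comm]
        _ ≤ c * |μ| := mul_le_mul_of_nonneg_right hqc (abs_nonneg _)
    calc h * (y' - z)^2 ≤ h * (y - A * q - z)^2 := mul_le_mul_of_nonneg_left c1 hh
      _ = h * (y - z)^2 - 2 * A * (h * q) * (y - z) + A^2 * ((h * q) * q) := by ring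
      _ ≤ _ := by
        rw [hq]; linarith [mul_le_mul_of_nonneg_left t1 (sq_nonneg A)]
  have e2 : (h - h0) * (y - z)^2 ≤ (h - h0) * D^2 :=
    mul_le_mul_of_nonneg_left hD (by linarith)
  have e3 : β * w' * (μ * (y - y')) ≤ A^2 * (β / (1 - β)) * c * |μ| := by
    have t1 : |y' - y| ≤ A * c := by
      have : |y' - y| ≤ |y - A * q - y| := sq_le_sq.1 c2
      refine this.trans ?_
      rw [show y - A * q - y = -(A * q) by ring, abs_neg, abs_mul, abs_of_nonneg hA]
      exact mul_le_mul_of_nonneg_left hqc hA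
    have t2 : μ * (y - y') ≤ |μ| * (A * c) := by
      calc μ * (y - y') ≤ |μ * (y - y')| := le_abs_self _
        _ = |μ| * |y' - y| := by rw [abs_mul, abs_sub_comm]
        _ ≤ _ := mul_le_mul_of_nonneg_left t1 (abs_nonneg _)
    calc β * w' * (μ * (y - y')) ≤ β * w' * (|μ| * (A * c)) :=
          mul_le_mul_of_nonneg_left t2 (mul_nonneg b0 hw0)
      _ ≤ β * (A / (1 - β)) * (|μ| * (A * c)) := by
          apply mul_le_mul_of_nonneg_right (mul_le_mul_of_nonneg_left hw1 b0)
          positivity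
      _ = _ := by ring
  have e4 : (1 + β) / (1 - β) = 1 + 2 * (β / (1 - β)) := by field_simp; ring
  rw [e4] at ih ⊢
  have e5 : (1 - β) * γ = μ - β * μ0 := by linarith
  have e6 : 2 * (1 - β) * (S + w * (γ * (y - z))) =
      2 * (1 - β) * S + 2 * A * μ * (y - z) + 2 * β * w' * μ * (y - z) - 2 * β * w * μ0 * (y - z) := by
    calc _ = 2 * (1 - β) * S + 2 * w * ((1 - β) * γ) * (y - z) := by ring
      _ = _ := by rw [e5]; nth_rewrite 1 [mul_sub]; rw [hw]; ring
  rw [e6]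
  nlinarith

/-- per-coordinate regret bound -/
lemma regret (β₁ β₂ : ℝ) (hβ₁ : β₁ ∈ Set.Ico (0:ℝ) 1) (hβ₂ : β₂ ∈ Set.Ico (0:ℝ) 1)
    (g m v vh x W : ℕ → ℝ) (hm0 : m 0 = 0) (hv0 : v 0 = 0) (hvh0 : vh 0 = 0)
    (hm : ∀ k, m (k+1) = β₁ * m k + (1 - β₁) * g (k+1))
    (hv : ∀ k, v (k+1) = β₂ * v k + (1 - β₂) * (g (k+1))^2)
    (hvh : ∀ k, vh (k+1) = max (vh k) (v (k+1)))
    (a b z D A : ℝ) (K : ℕ) (hA : 0 ≤ A) (hz : z ∈ Set.Icc a b)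
    (hx : ∀ k, (x (k+1) - z)^2 ≤ D^2) (hxm : ∀ k, x (k+1) ∈ Set.Icc a b)
    (hupd : ∀ k, k < K → x (k+2) =
      min (max (x (k+1) - A * (m (k+1) / √(vh (k+1)))) a) b)
    (hW : ∀ k, k < K → W (k+1) = A + β₁ * W (k+2))
    (hW0 : ∀ k, k ≤ K → 0 ≤ W (k+1)) (hW1 : ∀ k, k ≤ K → W (k+1) ≤ A / (1 - β₁))
    (N : ℕ) (hN : N ≤ K) :
    2 * (1 - β₁) * (∑ k ∈ range N, W (k+1) * (g (k+1) * (x (k+1) - z)))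
      - 2 * β₁ * W (N+1) * m N * (x (N+1) - z) + √(vh N) * (x (N+1) - z)^2
    ≤ D^2 * √(vh N) + A^2 * ((1 + β₁) / (1 - β₁)) / √(1 - β₂) * ∑ k ∈ range N, |m (k+1)| := by
  induction N with
  | zero => simp [hm0, hvh0]
  | succ N ih =>
    have ih := ih (by omega)
    have hNK : N < K := by omega
    rw [sum_range_succ, sum_range_succ]
    obtain ⟨_, f2, f3⟩ := vfacts β₁ β₂ hβ₁ hβ₂ g m v vh hm0 hv0 hvh0 hm hv hvh (N+1)
    obtain ⟨s1, s2, s3⟩ := step_facts β₂ hβ₂ _ _ _ f2 (uav_mem β₁ hβ₁ g (N+1)) f3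
    have hmono : √(vh N) ≤ √(vh (N+1)) :=
      Real.sqrt_le_sqrt (by rw [hvh]; exact le_max_left _ _)
    have c1 := clamp_sq (x (N+1) - A * (m (N+1) / √(vh (N+1)))) z a b hz
    have c2 := clamp_sq (x (N+1) - A * (m (N+1) / √(vh (N+1)))) (x (N+1)) a b (hxm N)
    rw [← hupd N hNK] at c1 c2
    have hm' := hm N
    have hW' := hW N hNK
    have hWa := hW0 (N+1) hN
    have hWb := hW1 (N+1) hN
    have hD := hx N
    simp only [add_assoc, Nat.reduceAdd] at *
    have h0h : 0 ≤ √(vh (N+1)) := Real.sqrt_nonneg _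
    generalize hq : m (N+1) / √(vh (N+1)) = q at *
    generalize √(vh (N+1)) = h at *
    generalize √(vh N) = h0 at *
    generalize x (N+2) = y' at *
    generalize x (N+1) = y at *
    generalize W (N+2) = w' at *
    generalize W (N+1) = w at *
    generalize m (N+1) = μ at *
    generalize m N = μ0 at *
    generalize g (N+1) = γ at *
    generalize (∑ k ∈ range N, W (k+1) * (g (k+1) * (x (k+1) - z))) = S at *
    generalize ∑ k ∈ range N, |m (k+1)| = T at *
    rw [div_eq_mul_one_div _ (√(1 - β₂))] at ih ⊢
    generalize 1 / √(1 - β₂) = c at *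
    exact regret_alg β₁ hβ₁ A hA h h0 q μ μ0 γ y y' z w w' D c S T h0h hmono s3 s2 c1 c2 hm' hW'
      hWa hWb hD ih

lemma descent {E : Type*} [NormedAddCommGroup E] [InnerProductSpace ℝ E] [CompleteSpace E]
    (F : E → ℝ) (gradF : E → E) (hdiff : ∀ p, HasGradientAt F (gradF p) p)
    (hF : ConvexOn ℝ Set.univ F)
    (L : ℝ) (hL : ∀ p q, ‖gradF p - gradF q‖ ≤ L * ‖p - q‖) (p q z : E) :
    F p - F z ≤ inner ℝ (gradF q) (p - z) + L / 2 * ‖p - q‖^2 := by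
  have hder : ∀ (d : E) (t : ℝ), HasDerivAt (fun t : ℝ => F (q + t • d))
      (inner ℝ (gradF (q + t • d)) d) t := by
    intro d t
    have h1 : HasDerivAt (fun t : ℝ => q + t • d) d t := by
      simpa using ((hasDerivAt_id t).smul_const d).const_add q
    have h2 := (hdiff (q + t • d)).hasFDerivAt.comp_hasDerivAt t h1
    have h3 : (InnerProductSpace.toDual ℝ E (gradF (q + t • d))) d =
        inner ℝ (gradF (q + t • d)) d := by simp
    rw [h3] at h2
    exact h2
  have up : F p ≤ F q + inner ℝ (gradF q) (p - q) + L / 2 * ‖p - q‖^2 := by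
    set d := p - q with hd
    have := image_le_of_deriv_right_le_deriv_boundary (f := fun t : ℝ => F (q + t • d))
      (f' := fun t => inner ℝ (gradF (q + t • d)) d) (a := 0) (b := 1)
      (B := fun t => F q + t * inner ℝ (gradF q) d + t^2 * (L / 2 * ‖d‖^2))
      (B' := fun t => inner ℝ (gradF q) d + t * (L * ‖d‖^2))
      (fun t _ => (hder d t).continuousAt.continuousWithinAt)
      (fun t _ => (hder d t).hasDerivWithinAt) (by simp) (by fun_prop)
      (fun t _ => by
        have h1 : HasDerivAt (fun t : ℝ => F q + t * inner ℝ (gradF q) d + t^2 * (L / 2 * ‖d‖^2))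
            (1 * inner ℝ (gradF q) d + (2 : ℕ) * t^(2-1) * (L / 2 * ‖d‖^2)) t :=
          (((hasDerivAt_id t).mul_const _).const_add _).add ((hasDerivAt_pow 2 t).mul_const _)
        have h2 := h1.hasDerivWithinAt (s := Set.Ici t)
        have h3 : 1 * inner ℝ (gradF q) d + (2 : ℕ) * t^(2-1) * (L / 2 * ‖d‖^2) =
            inner ℝ (gradF q) d + t * (L * ‖d‖^2) := by push_cast; ring
        rw [h3] at h2
        exact h2)
      (fun t ht => by
        have h1 : inner ℝ (gradF (q + t • d)) d - inner ℝ (gradF q) d ≤ t * (L * ‖d‖^2) := by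
          rw [← inner_sub_left]
          calc _ ≤ ‖gradF (q + t • d) - gradF q‖ * ‖d‖ := real_inner_le_norm _ _
            _ ≤ (L * ‖q + t • d - q‖) * ‖d‖ :=
              mul_le_mul_of_nonneg_right (hL _ _) (norm_nonneg _)
            _ = _ := by
              rw [add_sub_cancel_left, norm_smul, Real.norm_of_nonneg ht.1]; ring
        linarith) (Set.right_mem_Icc.2 zero_le_one)
    simpa [hd] using this
  have lo : F q + inner ℝ (gradF q) (z - q) ≤ F z := by
    have hc : ConvexOn ℝ Set.univ (fun t : ℝ => F (q + t • (z - q))) := by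
      have := hF.comp_affineMap (AffineMap.lineMap q z)
      have h3 : (F ∘ (AffineMap.lineMap q z : ℝ →ᵃ[ℝ] E)) = (fun t : ℝ => F (q + t • (z - q))) := by
        ext t
        simp [AffineMap.lineMap_apply, add_comm]
      rw [h3] at this
      exact this
    have := hc.le_slope_of_hasDerivAt (Set.mem_univ 0) (Set.mem_univ 1) zero_lt_one (hder (z - q) 0)
    simp [slope_def_field] at this
    linarith
  have : inner ℝ (gradF q) (p - z) = inner ℝ (gradF q) (p - q) - inner ℝ (gradF q) (z - q) := by
    rw [← inner_sub_right]; congr 1; abel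
  linarith

lemma sum_Icc_range (K : ℕ) (f : ℕ → ℝ) : ∑ k ∈ Icc 1 K, f k = ∑ k ∈ range K, f (k+1) := by
  induction K with
  | zero => simp
  | succ K ih => rw [Finset.sum_Icc_succ_top (by omega), ih, sum_range_succ]

lemma W_facts (β A : ℝ) (hβ : β ∈ Set.Ico (0:ℝ) 1) (hA : 0 ≤ A) (K : ℕ) (αs : ℕ → ℝ)
    (hα : ∀ k, 1 ≤ k → k ≤ K → αs k = A) (W : ℕ → ℝ)
    (hW : ∀ k, W k = ∑ j ∈ Icc k K, αs j * β ^ (j - k)) :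
    (∀ k, k < K → W (k+1) = A + β * W (k+2)) ∧ W (K+1) = 0 ∧ (∀ k, k ≤ K → 0 ≤ W (k+1)) ∧
      (∀ k, k ≤ K → W (k+1) ≤ A / (1 - β)) := by
  have hb : 0 < 1 - β := by linarith [hβ.2]
  have h1 : ∀ k, k < K → W (k+1) = A + β * W (k+2) := by
    intro k hk
    rw [hW, hW, ← Finset.add_sum_Ioc_eq_sum_Icc (by omega : k + 1 ≤ K), hα _ (by omega) (by omega),
      mul_sum]
    simp only [Nat.sub_self, pow_zero, mul_one]
    congr 1
    apply sum_congr
    · ext j; simp only [mem_Ioc, mem_Icc]; omega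
    · intro j hj
      simp only [mem_Icc] at hj
      rw [show j - (k+1) = (j - (k+2)) + 1 by omega, pow_succ]; ring
  have h2 : W (K+1) = 0 := by rw [hW]; simp
  have h3 : ∀ d k, k + d = K → 0 ≤ W (k+1) ∧ W (k+1) ≤ A / (1 - β) := by
    intro d
    induction d with
    | zero =>
      intro k hk
      have : k = K := by omega
      subst this
      rw [h2]; exact ⟨le_rfl, by positivity⟩
    | succ d ih =>
      intro k hk
      obtain ⟨i1, i2⟩ := ih (k+1) (by omega)
      rw [h1 k (by omega)]
      constructor
      · exact add_nonneg hA (mul_nonneg hβ.1 i1)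
      · calc A + β * W (k+2) ≤ A + β * (A / (1 - β)) := by
              linarith [mul_le_mul_of_nonneg_left i2 hβ.1]
          _ = A / (1 - β) := by field_simp; ring
  exact ⟨h1, h2, fun k hk => (h3 (K-k) k (by omega)).1, fun k hk => (h3 (K-k) k (by omega)).2⟩

lemma avg_bound {Ω : Type*} [MeasurableSpace Ω] (P : Measure Ω) (β C : ℝ)
    (hβ : β ∈ Set.Ico (0:ℝ) 1) (hC : 0 ≤ C) (f h : ℕ → Ω → ℝ) (hf0 : ∀ ω, f 0 ω = 0)
    (hf : ∀ k ω, f (k+1) ω ≤ β * f k ω + (1 - β) * h (k+1) ω)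
    (hfi : ∀ k, Integrable (f k) P) (hhi : ∀ k, Integrable (h (k+1)) P)
    (hh : ∀ k, ∫ ω, h (k+1) ω ∂P ≤ C) (k : ℕ) : ∫ ω, f k ω ∂P ≤ C := by
  induction k with
  | zero => simpa [hf0] using hC
  | succ k ih =>
    calc ∫ ω, f (k+1) ω ∂P ≤ ∫ ω, (β * f k ω + (1 - β) * h (k+1) ω) ∂P :=
          integral_mono (hfi _) (((hfi k).const_mul _).add ((hhi k).const_mul _)) (hf k)
      _ = β * ∫ ω, f k ω ∂P + (1 - β) * ∫ ω, h (k+1) ω ∂P := by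
          rw [integral_add ((hfi k).const_mul _) ((hhi k).const_mul _), integral_const_mul,
            integral_const_mul]
      _ ≤ β * C + (1 - β) * C :=
          add_le_add (mul_le_mul_of_nonneg_left ih hβ.1)
            (mul_le_mul_of_nonneg_left (hh k) (by linarith [hβ.2]))
      _ = C := by ring

lemma delay_sq (d e : ℕ → ℝ) (he : ∀ l, e l = 0 ∨ e l = 1) (t τ : ℕ) (ht : t ≤ τ) :
    (∑ l ∈ range t, d l * e l)^2 ≤ τ * ∑ l ∈ range τ, (d l)^2 := by
  calc (∑ l ∈ range t, d l * e l)^2 ≤ (#(range t) : ℝ) * ∑ l ∈ range t, (d l * e l)^2 :=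
        sq_sum_le_card_mul_sum_sq
    _ ≤ τ * ∑ l ∈ range τ, (d l)^2 := by
      rw [card_range]
      apply mul_le_mul (by exact_mod_cast ht) _ (sum_nonneg fun _ _ => sq_nonneg _) (by positivity)
      calc ∑ l ∈ range t, (d l * e l)^2 ≤ ∑ l ∈ range t, (d l)^2 := by
            apply sum_le_sum
            intro l _
            rcases he l with h | h <;> rw [h] <;> nlinarith [sq_nonneg (d l)]
        _ ≤ _ := sum_le_sum_of_subset_of_nonneg (range_mono ht) (fun _ _ _ => sq_nonneg _)

lemma final_alg (β c1 α L G₁ NDG t s K sK : ℝ) (S Z : ℝ) (hβ : β ∈ Set.Ico (0:ℝ) 1)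
    (hc1 : 0 < c1) (hα : 0 < α) (hL : 0 ≤ L) (hG : 0 ≤ G₁) (hN : 0 ≤ NDG)
    (hs : 0 ≤ s) (hsK : 0 < sK) (hK : K = sK^2)
    (hZ : K * (α / sK) ≤ Z)
    (hS : S ≤ 1 / (2 * (1 - β)) * (NDG + (α / sK)^2 * ((1 + β) / (1 - β)) / √c1 * (K * G₁))
      + K * ((α / sK) / (1 - β) * (L / 2 * ((α / sK)^2 / c1 * (t^2 * s))))) :
    S / Z ≤ (1 / (2 * α * sK * (1 - β))) *
          (NDG + α^2 * G₁ / ((1 - β)^2 * √c1) + α^3 * L * t^2 * s / (sK * c1)) := by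
  obtain ⟨b0, b1⟩ := hβ
  have hb : 0 < 1 - β := by linarith
  have hr : 0 < √c1 := Real.sqrt_pos.2 hc1
  have hKa : K * (α / sK) = α * sK := by rw [hK]; field_simp
  rw [hKa] at hZ
  have hZ0 : 0 < α * sK := by positivity
  set R := NDG + α^2 * G₁ / ((1 - β)^2 * √c1) + α^3 * L * t^2 * s / (sK * c1) with hR
  have hR0 : 0 ≤ R := by positivity
  have h1 : (1 + β) / (1 - β) ≤ 1 / (1 - β)^2 := by
    rw [div_le_div_iff₀ hb (by positivity)]
    nlinarith [mul_nonneg (mul_nonneg b0 b0) hb.le]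
  have hS2 : S ≤ 1 / (2 * (1 - β)) * R := by
    refine hS.trans ?_
    have e1 : (α / sK)^2 * ((1 + β) / (1 - β)) / √c1 * (K * G₁) ≤ α^2 * G₁ / ((1 - β)^2 * √c1) := by
      calc _ = (α^2 * G₁ / √c1) * ((1 + β) / (1 - β)) := by rw [hK]; field_simp
        _ ≤ (α^2 * G₁ / √c1) * (1 / (1 - β)^2) := mul_le_mul_of_nonneg_left h1 (by positivity)
        _ = _ := by field_simp
    have e2 : K * ((α / sK) / (1 - β) * (L / 2 * ((α / sK)^2 / c1 * (t^2 * s)))) =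
        1 / (2 * (1 - β)) * (α^3 * L * t^2 * s / (sK * c1)) := by
      rw [hK]; field_simp
    rw [e2, hR]
    have := mul_le_mul_of_nonneg_left e1 (by positivity : 0 ≤ 1 / (2 * (1 - β)))
    linarith
  calc S / Z ≤ (1 / (2 * (1 - β)) * R) / Z := div_le_div_of_nonneg_right hS2 (hZ0.le.trans hZ)
    _ ≤ (1 / (2 * (1 - β)) * R) / (α * sK) :=
      div_le_div_of_nonneg_left (by positivity) hZ0 hZ
    _ = _ := by field_simp

/-- convex case with delay: with `α_k = α/√K`, weights
`w_k = ∑_{j=k}^K α_j β₁^{j−k}` and probabilities `p_k = w_k/∑_t w_t`,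
`∑_{k=1}^K p_k E[F(x^(k))] − F*
  ≤ (1/(2α√K(1−β₁))) (n D∞² G∞ + α² G₁/((1−β₁)²√(1−β₂)) + α³ L τ² s/(√K(1−β₂)))`. -/
theorem stmt3
    {n : ℕ} (hn : 1 ≤ n)
    (β₁ β₂ : ℝ) (hβ₁ : β₁ ∈ Set.Ico (0:ℝ) 1) (hβ₂ : β₂ ∈ Set.Ico (0:ℝ) 1)
    {Ω : Type*} [mΩ : MeasurableSpace Ω] (P : Measure Ω) [IsProbabilityMeasure P]
    (ℱ : Filtration ℕ mΩ)
    (g m v vhat x xhat : ℕ → Ω → EuclideanSpace ℝ (Fin n))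
    (hgmeas : ∀ k, Measurable (g k))
    (hxhatmeas : ∀ k, Measurable (xhat k))
    (hxmeas : ∀ k, Measurable[ℱ k] (x k))
    (hm0 : ∀ ω i, m 0 ω i = 0) (hv0 : ∀ ω i, v 0 ω i = 0) (hvhat0 : ∀ ω i, vhat 0 ω i = 0)
    (hm : ∀ k ω i, m (k+1) ω i = β₁ * m k ω i + (1 - β₁) * g (k+1) ω i)
    (hv : ∀ k ω i, v (k+1) ω i = β₂ * v k ω i + (1 - β₂) * (g (k+1) ω i)^2)
    (hvhat : ∀ k ω i, vhat (k+1) ω i = max (vhat k ω i) (v (k+1) ω i))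
    -- the box `X = [a₁,b₁]×⋯×[aₙ,bₙ]` with ℓ∞-diameter at most `D∞`
    (a b : Fin n → ℝ) (hab : ∀ i, a i ≤ b i)
    (X : Set (EuclideanSpace ℝ (Fin n)))
    (hX : X = {p : EuclideanSpace ℝ (Fin n) | ∀ i, p i ∈ Set.Icc (a i) (b i)})
    (Dinf Ginf G₁ : ℝ)
    (hD : ∀ p ∈ X, ∀ q ∈ X, ∀ i, |p i - q i| ≤ Dinf)
    (hGinf : ∀ k, 1 ≤ k → ∀ᵐ ω ∂P, ∀ i, |g k ω i| ≤ Ginf)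
    (hG1 : ∀ k, 1 ≤ k → ∫ ω, (∑ i, |g k ω i|) ∂P ≤ G₁)
    (s : ℕ) (hs1 : 1 ≤ s) (hsn : s ≤ n)
    (hg0 : ∀ k, 1 ≤ k →
      ∫ ω, ((Finset.univ.filter (fun i => g k ω i ≠ 0)).card : ℝ) ∂P ≤ s)
    (F : EuclideanSpace ℝ (Fin n) → ℝ) (hF : ConvexOn ℝ Set.univ F)
    (gradF : EuclideanSpace ℝ (Fin n) → EuclideanSpace ℝ (Fin n))
    (hdiff : ∀ p, HasGradientAt F (gradF p) p)
    (L : ℝ) (hL : ∀ p q, ‖gradF p - gradF q‖ ≤ L * ‖p - q‖)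
    (Fstar : ℝ) (hFstar : IsLeast (F '' X) Fstar)
    (K : ℕ) (hK : 1 ≤ K) (α : ℝ) (hα : 0 < α)
    (αseq : ℕ → ℝ) (hαpos : ∀ k, 0 < αseq k)
    (hαseq : ∀ k, 1 ≤ k → k ≤ K → αseq k = α / Real.sqrt K)
    -- the clamped update (with `0/0 = 0`, Lean's division convention)
    (hx1 : ∀ ω, x 1 ω ∈ X) (hx0 : ∀ ω, x 0 ω = x 1 ω)
    (hupd : ∀ k, 1 ≤ k → ∀ ω i,
      x (k+1) ω i = min (max (x k ω i - αseq k * (m k ω i / Real.sqrt (vhat k ω i))) (a i)) (b i))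
    -- bounded-staleness delay structure
    (τ : ℕ)
    (hdelay : ∀ k, 1 ≤ k → ∀ᵐ ω ∂P, ∃ τk, τk ≤ τ ∧ ∃ A : ℕ → Finset (Fin n),
      ∀ i, xhat k ω i = x k ω i -
        ∑ l ∈ Finset.range τk, (x (k - l) ω i - x (k - l - 1) ω i) *
          (if i ∈ A l then (1:ℝ) else 0))
    (hcond : ∀ k, 1 ≤ k → ∀ i,
      P[(fun ω' => g k ω' i)|ℱ k] =ᵐ[P] (fun ω => gradF (xhat k ω) i)) :
    (∑ k ∈ Finset.Icc 1 K,
        ((∑ j ∈ Finset.Icc k K, αseq j * β₁ ^ (j - k)) /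
          (∑ t ∈ Finset.Icc 1 K, ∑ j ∈ Finset.Icc t K, αseq j * β₁ ^ (j - t))) *
          (∫ ω, F (x k ω) ∂P)) - Fstar
      ≤ (1 / (2 * α * Real.sqrt K * (1 - β₁))) *
          (n * Dinf^2 * Ginf + α^2 * G₁ / ((1 - β₁)^2 * Real.sqrt (1 - β₂))
            + α^3 * L * τ^2 * s / (Real.sqrt K * (1 - β₂))) := by
  obtain ⟨⟨z, hzX, hzF⟩, hmin⟩ := hFstar
  have hzb : ∀ i, z i ∈ Set.Icc (a i) (b i) := by rw [hX] at hzX; exact hzX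
  have hK0 : (0:ℝ) < K := by exact_mod_cast hK
  have hsK : 0 < √(K:ℝ) := Real.sqrt_pos.2 hK0
  set A := α / √(K:ℝ) with hA
  have hA0 : 0 < A := div_pos hα hsK
  have hb1 : 0 < 1 - β₁ := by linarith [hβ₁.2]
  have hb2 : 0 < 1 - β₂ := by linarith [hβ₂.2]
  -- iterates stay in the box
  have hx1b : ∀ ω i, x 1 ω i ∈ Set.Icc (a i) (b i) := by
    intro ω; have := hx1 ω; rw [hX] at this; exact this
  have hxb : ∀ k ω i, x k ω i ∈ Set.Icc (a i) (b i) := by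
    intro k ω i
    rcases k with _ | k
    · rw [hx0]; exact hx1b ω i
    · rcases k with _ | k
      · exact hx1b ω i
      · rw [hupd (k+1) (by omega)]; exact clamp_mem _ _ _ (hab i)
  have hxX : ∀ k ω, x k ω ∈ X := by intro k ω; rw [hX]; exact hxb k ω
  have hxD : ∀ k ω i, |x k ω i - z i| ≤ Dinf := fun k ω i => hD _ (hxX k ω) _ hzX i
  have hxD2 : ∀ k ω i, (x k ω i - z i)^2 ≤ Dinf^2 := by
    intro k ω i
    rw [← sq_abs]; exact pow_le_pow_left₀ (abs_nonneg _) (hxD k ω i) 2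
  -- measurability
  have hxm' : ∀ k, Measurable (x k) := fun k => (hxmeas k).mono (ℱ.le k) le_rfl
  have hxim : ∀ k i, Measurable (fun ω => x k ω i) := by
    intro k i; have := hxm' k; fun_prop
  have hgim : ∀ k i, Measurable (fun ω => g k ω i) := by
    intro k i; have := hgmeas k; fun_prop
  have hgall : ∀ᵐ ω ∂P, ∀ k i, |g (k+1) ω i| ≤ Ginf :=
    ae_all_iff.2 fun k => hGinf (k+1) (by omega)
  have hG0 : 0 ≤ Ginf := by
    obtain ⟨ω, hω⟩ := hgall.exists
    exact (abs_nonneg _).trans (hω 0 ⟨0, hn⟩)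
  have hgint : ∀ k i, Integrable (fun ω => g (k+1) ω i) P := by
    intro k i
    refine Integrable.of_bound (hgim _ _).aestronglyMeasurable Ginf ?_
    filter_upwards [hgall] with ω hω using hω k i
  have hmint : ∀ i k, Integrable (fun ω => m k ω i) P := by
    intro i k
    induction k with
    | zero => simp [hm0]
    | succ k ih => simp only [hm]; exact (ih.const_mul _).add ((hgint k i).const_mul _)
  have hG1' : 0 ≤ G₁ := by
    refine le_trans ?_ (hG1 1 le_rfl)
    exact integral_nonneg fun ω => sum_nonneg fun i _ => abs_nonneg _
  have hmG : ∀ k, ∫ ω, (∑ i, |m k ω i|) ∂P ≤ G₁ := by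
    apply avg_bound P β₁ G₁ hβ₁ hG1' (fun k ω => ∑ i, |m k ω i|) (fun k ω => ∑ i, |g k ω i|)
    · intro ω; simp [hm0]
    · intro k ω
      rw [mul_sum, mul_sum, ← sum_add_distrib]
      apply sum_le_sum
      intro i _
      rw [hm]
      refine (abs_add_le _ _).trans ?_
      rw [abs_mul, abs_mul, abs_of_nonneg hβ₁.1, abs_of_nonneg hb1.le]
    · intro k; exact integrable_finsetSum _ fun i _ => (hmint i k).abs
    · intro k; exact integrable_finsetSum _ fun i _ => (hgint k i).abs
    · intro k; exact hG1 (k+1) (by omega)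
  -- sparsity averages
  set u : ℕ → Ω → Fin n → ℝ := fun k ω i => uav β₁ (fun k => g k ω i) k with hu
  have hind : ∀ k i, Measurable (fun ω => if g k ω i ≠ 0 then (1:ℝ) else 0) := by
    intro k i
    apply Measurable.ite _ measurable_const measurable_const
    exact (hgim k i) (measurableSet_singleton 0).compl
  have humeas : ∀ i k, Measurable (fun ω => u k ω i) := by
    intro i k
    induction k with
    | zero => simp only [hu, uav]; exact measurable_const
    | succ k ih =>
      simp only [hu, uav]
      exact (ih.const_mul _).add ((hind (k+1) i).const_mul _)
  have hum : ∀ k ω i, u k ω i ∈ Set.Icc (0:ℝ) 1 := fun k ω i => uav_mem β₁ hβ₁ _ k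
  have huint : ∀ i k, Integrable (fun ω => u k ω i) P := by
    intro i k
    refine Integrable.of_bound (humeas i k).aestronglyMeasurable 1 (ae_of_all _ fun ω => ?_)
    rw [Real.norm_of_nonneg (hum k ω i).1]; exact (hum k ω i).2
  have hindint : ∀ k i, Integrable (fun ω => if g k ω i ≠ 0 then (1:ℝ) else 0) P := by
    intro k i
    refine Integrable.of_bound (hind k i).aestronglyMeasurable 1 (ae_of_all _ fun ω => ?_)
    split_ifs <;> simp
  have hus : ∀ k, ∫ ω, (∑ i, u k ω i) ∂P ≤ s := by
    apply avg_bound P β₁ s hβ₁ (by positivity) (fun k ω => ∑ i, u k ω i)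
      (fun k ω => ∑ i, if g k ω i ≠ 0 then (1:ℝ) else 0)
    · intro ω; simp [hu, uav]
    · intro k ω
      rw [mul_sum, mul_sum, ← sum_add_distrib]
      exact le_of_eq (sum_congr rfl fun i _ => rfl)
    · intro k; exact integrable_finsetSum _ fun i _ => huint i k
    · intro k; exact integrable_finsetSum _ fun i _ => hindint (k+1) i
    · intro k
      refine le_trans (le_of_eq ?_) (hg0 (k+1) (by omega))
      congr 1; ext ω
      rw [Finset.sum_boole]
  have hvf : ∀ k ω i, 0 ≤ vhat k ω i ∧ (m k ω i)^2 * (1 - β₂) ≤ vhat k ω i * u k ω i := by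
    intro k ω i
    exact (vfacts β₁ β₂ hβ₁ hβ₂ (fun k => g k ω i) (fun k => m k ω i) (fun k => v k ω i)
      (fun k => vhat k ω i) (hm0 ω i) (hv0 ω i) (hvhat0 ω i) (fun k => hm k ω i)
      (fun k => hv k ω i) (fun k => hvhat k ω i) k).2
  -- L ≥ 0
  have hL0 : 0 ≤ L := by
    have h := hL (EuclideanSpace.single ⟨0, hn⟩ 1) 0
    have h2 := (norm_nonneg _).trans h
    simpa using h2
  -- weights
  set W : ℕ → ℝ := fun k => ∑ j ∈ Icc k K, αseq j * β₁ ^ (j - k) with hWdef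
  obtain ⟨w1, w2, w3, w4⟩ := W_facts β₁ A hβ₁ hA0.le K αseq hαseq W (fun _ => rfl)
  -- delay bound
  have hstep : ∀ k, k ≤ K → ∀ l ω i, (x (k - l) ω i - x (k - l - 1) ω i)^2 ≤
      A^2 / (1 - β₂) * u (k - l - 1) ω i := by
    intro k hk l ω i
    have hnn : 0 ≤ A^2 / (1 - β₂) * u (k - l - 1) ω i := mul_nonneg (by positivity) (hum _ _ _).1
    obtain ⟨q, hq⟩ : ∃ q, q = k - l - 1 := ⟨_, rfl⟩
    rcases Nat.eq_zero_or_pos q with h0 | h0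
    · have hz : x (k - l) ω i - x (k - l - 1) ω i = 0 := by
        rcases Nat.eq_zero_or_pos (k - l) with h1 | h1
        · rw [h1]; simp
        · rw [show k - l = 1 by omega]; simp [hx0]
      rw [hz]; simpa using hnn
    · rw [← hq, show k - l = q + 1 by omega, hupd q h0, hαseq q h0 (by omega)]
      refine (clamp_sq _ _ _ _ (hxb q ω i)).trans ?_
      have := (step_facts β₂ hβ₂ _ _ _ (hvf q ω i).1 (hum q ω i) (hvf q ω i).2).1
      calc _ = A^2 * (m q ω i / √(vhat q ω i))^2 := by ring
        _ ≤ A^2 * (u q ω i / (1 - β₂)) := mul_le_mul_of_nonneg_left this (sq_nonneg _)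
        _ = _ := by ring
  have hdist : ∀ k, 1 ≤ k → k ≤ K → ∀ᵐ ω ∂P, ‖x k ω - xhat k ω‖^2 ≤
      A^2 / (1 - β₂) * (τ * ∑ l ∈ range τ, ∑ i, u (k - l - 1) ω i) := by
    intro k hk1 hkK
    filter_upwards [hdelay k hk1] with ω ⟨t, ht, Aset, hω⟩
    rw [EuclideanSpace.norm_sq_eq]
    calc ∑ i, ‖(x k ω - xhat k ω) i‖^2
        ≤ ∑ i, ((τ:ℝ) * ∑ l ∈ range τ, A^2 / (1 - β₂) * u (k - l - 1) ω i) := by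
          apply sum_le_sum
          intro i _
          rw [Real.norm_eq_abs, sq_abs]
          have e : (x k ω - xhat k ω) i = ∑ l ∈ range t, (x (k - l) ω i - x (k - l - 1) ω i) *
              (if i ∈ Aset l then (1:ℝ) else 0) := by
            rw [PiLp.sub_apply, hω i]; ring
          rw [e]
          refine (delay_sq _ _ (fun l => ?_) t τ ht).trans ?_
          · split_ifs <;> simp
          · exact mul_le_mul_of_nonneg_left (sum_le_sum fun l _ => hstep k hkK l ω i)
              (by positivity)
      _ = _ := by
          rw [← mul_sum, sum_comm]
          simp only [← mul_sum]
          ring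
  -- conditional expectation
  have hxzb : ∀ k i, StronglyMeasurable[ℱ k] (fun ω => x k ω i - z i) := by
    intro k i
    have h1 : Measurable[ℱ k] (fun ω => x k ω i) :=
      (EuclideanSpace.proj (𝕜 := ℝ) i).continuous.measurable.comp (hxmeas k)
    exact (h1.sub_const _).stronglyMeasurable
  have hgx : ∀ k i, Integrable (fun ω => g (k+1) ω i * (x (k+1) ω i - z i)) P := by
    intro k i
    refine (hgint k i).mul_bdd (c := Dinf) ((hxim _ i).sub_const _).aestronglyMeasurable
      (ae_of_all _ fun ω => hxD _ ω i)
  have hgrad : ∀ k i, Integrable (fun ω => gradF (xhat (k+1) ω) i * (x (k+1) ω i - z i)) P := by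
    intro k i
    have h1 : Integrable (fun ω => gradF (xhat (k+1) ω) i) P :=
      integrable_condExp.congr (hcond (k+1) (by omega) i)
    refine h1.mul_bdd (c := Dinf) ((hxim _ i).sub_const _).aestronglyMeasurable
      (ae_of_all _ fun ω => hxD _ ω i)
  have hce : ∀ k i, ∫ ω, gradF (xhat (k+1) ω) i * (x (k+1) ω i - z i) ∂P =
      ∫ ω, g (k+1) ω i * (x (k+1) ω i - z i) ∂P := by
    intro k i
    have h1 := condExp_mul_of_stronglyMeasurable_right (μ := P) (m := ℱ (k+1))
      (f := fun ω => g (k+1) ω i) (hxzb (k+1) i) (hgx k i) (hgint k i)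
    have h2 := integral_condExp (μ := P) (f := (fun ω => g (k+1) ω i) *
      (fun ω => x (k+1) ω i - z i)) (ℱ.le (k+1))
    rw [integral_congr_ae h1] at h2
    rw [show ∫ ω, g (k+1) ω i * (x (k+1) ω i - z i) ∂P = ∫ ω, ((fun ω => g (k+1) ω i) *
      (fun ω => x (k+1) ω i - z i)) ω ∂P from rfl, ← h2]
    apply integral_congr_ae
    filter_upwards [hcond (k+1) (by omega) i] with ω hω
    simp only [Pi.mul_apply]
    rw [hω]
  -- function values
  have hFc : Continuous F := continuous_iff_continuousAt.2 fun p => (hdiff p).continuousAt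
  have hXc : IsCompact X := by
    have h1 : X = (WithLp.toLp 2) '' (Set.univ.pi fun i => Set.Icc (a i) (b i)) := by
      rw [hX]; ext p
      constructor
      · intro hp
        exact ⟨p.ofLp, fun i _ => hp i, rfl⟩
      · rintro ⟨q, hq, rfl⟩ i
        exact hq i (Set.mem_univ _)
    rw [h1]
    exact (isCompact_univ_pi fun i => isCompact_Icc).image (PiLp.continuous_toLp 2 _)
  have hFint : ∀ k, Integrable (fun ω => F (x k ω)) P := by
    intro k
    obtain ⟨C, hC⟩ := hXc.exists_bound_of_continuousOn hFc.continuousOn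
    exact Integrable.of_bound (hFc.measurable.comp (hxm' k)).aestronglyMeasurable C
      (ae_of_all _ fun ω => hC _ (hxX k ω))
  have hFk : ∀ k, k < K → (∫ ω, F (x (k+1) ω) ∂P) - Fstar ≤
      (∑ i, ∫ ω, g (k+1) ω i * (x (k+1) ω i - z i) ∂P) +
        L / 2 * (A^2 / (1 - β₂) * ((τ:ℝ)^2 * s)) := by
    intro k hk
    have hI1 : Integrable (fun ω => ∑ i, gradF (xhat (k+1) ω) i * (x (k+1) ω i - z i)) P :=
      integrable_finsetSum _ fun i _ => hgrad k i
    have hI2' : ∀ l ∈ range τ, Integrable (fun ω => ∑ i, u (k + 1 - l - 1) ω i) P :=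
      fun l _ => integrable_finsetSum _ fun i _ => huint i _
    have hI2 : Integrable (fun ω => L / 2 * (A^2 / (1 - β₂) *
        (τ * ∑ l ∈ range τ, ∑ i, u (k + 1 - l - 1) ω i))) P :=
      ((((integrable_finsetSum _ hI2').const_mul _).const_mul _).const_mul _)
    have h1 : ∫ ω, (F (x (k+1) ω) - Fstar) ∂P ≤
        ∫ ω, ((∑ i, gradF (xhat (k+1) ω) i * (x (k+1) ω i - z i)) + L / 2 * (A^2 / (1 - β₂) *
          (τ * ∑ l ∈ range τ, ∑ i, u (k + 1 - l - 1) ω i))) ∂P := by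
      apply integral_mono_ae ((hFint _).sub (integrable_const _)) (hI1.add hI2)
      filter_upwards [hdist (k+1) (by omega) (by omega)] with ω hω
      have h2 := descent F gradF hdiff hF L hL (x (k+1) ω) (xhat (k+1) ω) z
      have h3 : inner ℝ (gradF (xhat (k+1) ω)) (x (k+1) ω - z) =
          ∑ i, gradF (xhat (k+1) ω) i * (x (k+1) ω i - z i) := by
        rw [PiLp.inner_apply]
        apply sum_congr rfl
        intro i _
        simp [mul_comm]
      rw [h3, hzF] at h2
      refine h2.trans ?_
      have := mul_le_mul_of_nonneg_left hω (by positivity : 0 ≤ L / 2)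
      simp only [Pi.add_apply]
      linarith
    rw [integral_sub (hFint _) (integrable_const _), integral_const, integral_add hI1 hI2,
      integral_finsetSum _ (fun i _ => hgrad k i), integral_const_mul, integral_const_mul,
      integral_const_mul, integral_finsetSum _ hI2'] at h1
    simp only [probReal_univ, one_smul, hce] at h1
    refine h1.trans ?_
    refine add_le_add le_rfl (mul_le_mul_of_nonneg_left (mul_le_mul_of_nonneg_left ?_
      (by positivity)) (by positivity))
    calc (τ:ℝ) * ∑ l ∈ range τ, ∫ ω, ∑ i, u (k + 1 - l - 1) ω i ∂P
        ≤ τ * ∑ l ∈ range τ, (s:ℝ) :=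
          mul_le_mul_of_nonneg_left (sum_le_sum fun l _ => hus _) (by positivity)
      _ = (τ:ℝ)^2 * s := by simp; ring
  -- regret
  have hreg : ∑ k ∈ range K, W (k+1) * (∑ i, ∫ ω, g (k+1) ω i * (x (k+1) ω i - z i) ∂P) ≤
      1 / (2 * (1 - β₁)) * (n * Dinf^2 * Ginf +
        A^2 * ((1 + β₁) / (1 - β₁)) / √(1 - β₂) * (K * G₁)) := by
    have hI : ∀ k ∈ range K, Integrable (fun ω => W (k+1) *
        ∑ i, g (k+1) ω i * (x (k+1) ω i - z i)) P :=
      fun k _ => (integrable_finsetSum _ fun i _ => hgx k i).const_mul _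
    have e1 : ∑ k ∈ range K, W (k+1) * (∑ i, ∫ ω, g (k+1) ω i * (x (k+1) ω i - z i) ∂P) =
        ∫ ω, ∑ k ∈ range K, W (k+1) * ∑ i, g (k+1) ω i * (x (k+1) ω i - z i) ∂P := by
      rw [integral_finsetSum _ hI]
      apply sum_congr rfl
      intro k _
      rw [integral_const_mul, integral_finsetSum _ (fun i _ => hgx k i)]
    have hJ' : ∀ k ∈ range K, Integrable (fun ω => ∑ i, |m (k+1) ω i|) P :=
      fun k _ => integrable_finsetSum _ fun i _ => (hmint i _).abs
    have hJ : Integrable (fun ω => A^2 * ((1 + β₁) / (1 - β₁)) / √(1 - β₂) *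
        ∑ k ∈ range K, ∑ i, |m (k+1) ω i|) P := (integrable_finsetSum _ hJ').const_mul _
    have e2 : ∫ ω, ∑ k ∈ range K, W (k+1) * ∑ i, g (k+1) ω i * (x (k+1) ω i - z i) ∂P ≤
        ∫ ω, 1 / (2 * (1 - β₁)) * (n * Dinf^2 * Ginf +
          A^2 * ((1 + β₁) / (1 - β₁)) / √(1 - β₂) * ∑ k ∈ range K, ∑ i, |m (k+1) ω i|) ∂P := by
      apply integral_mono_ae (integrable_finsetSum _ hI)
        (((integrable_const _).add hJ).const_mul _)
      filter_upwards [hgall] with ω hω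
      have hi : ∀ i, 2 * (1 - β₁) * (∑ k ∈ range K, W (k+1) * (g (k+1) ω i * (x (k+1) ω i - z i)))
          ≤ Dinf^2 * Ginf + A^2 * ((1 + β₁) / (1 - β₁)) / √(1 - β₂) *
            ∑ k ∈ range K, |m (k+1) ω i| := by
        intro i
        have h1 := regret β₁ β₂ hβ₁ hβ₂ (fun k => g k ω i) (fun k => m k ω i) (fun k => v k ω i)
          (fun k => vhat k ω i) (fun k => x k ω i) W (hm0 ω i) (hv0 ω i) (hvhat0 ω i)
          (fun k => hm k ω i) (fun k => hv k ω i) (fun k => hvhat k ω i) (a i) (b i) (z i) Dinf A K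
          hA0.le (hzb i) (fun k => hxD2 _ ω i) (fun k => hxb _ ω i)
          (fun k hk => by
            rw [← hαseq (k+1) (by omega) (by omega)]; exact hupd (k+1) (by omega) ω i)
          w1 w3 w4 K le_rfl
        have h2 : √(vhat K ω i) ≤ Ginf := by
          rw [Real.sqrt_le_left hG0]
          exact (vbound β₂ Ginf hβ₂ (fun k => g k ω i) (fun k => v k ω i) (fun k => vhat k ω i)
            (hv0 ω i) (hvhat0 ω i) (fun k => hv k ω i) (fun k => hvhat k ω i)
            (fun k => hω k i) K).2
        rw [w2] at h1
        have h3 : 0 ≤ √(vhat K ω i) * (x (K+1) ω i - z i)^2 := by positivity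
        have h4 := mul_le_mul_of_nonneg_left h2 (sq_nonneg Dinf)
        simp only [mul_zero, zero_mul, sub_zero] at h1
        linarith
      have hsum := sum_le_sum (s := Finset.univ) fun i _ => hi i
      rw [← mul_sum, sum_comm, sum_add_distrib, ← mul_sum, ← mul_sum,
        sum_comm (s := Finset.univ) (t := range K) (f := fun i k => |m (k+1) ω i|)] at hsum
      simp only [← mul_sum] at hsum
      simp only [sum_const, card_univ, Fintype.card_fin, nsmul_eq_mul] at hsum
      simp only [Pi.add_apply]
      rw [one_div, inv_mul_eq_div, le_div_iff₀ (by positivity)]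
      linarith
    rw [e1]
    refine e2.trans ?_
    rw [integral_const_mul, integral_add (integrable_const _) hJ,
      integral_const_mul (A^2 * ((1 + β₁) / (1 - β₁)) / √(1 - β₂)),
      integral_finsetSum _ hJ']
    simp only [integral_const, probReal_univ, one_smul]
    have e3 : ∑ k ∈ range K, ∫ ω, ∑ i, |m (k+1) ω i| ∂P ≤ K * G₁ := by
      refine (sum_le_sum fun k _ => hmG (k+1)).trans (le_of_eq ?_)
      simp
    have hβ0 := hβ₁.1
    gcongr
  -- assembling
  have hWpos : K * A ≤ ∑ t ∈ range K, W (t+1) := by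
    calc (K:ℝ) * A = ∑ t ∈ range K, A := by simp
      _ ≤ _ := by
        apply sum_le_sum
        intro k hk
        rw [mem_range] at hk
        rw [w1 k hk]
        linarith [mul_nonneg hβ₁.1 (w3 (k+1) (by omega))]
  have hZ0 : 0 < ∑ t ∈ range K, W (t+1) := lt_of_lt_of_le (by positivity) hWpos
  change (∑ k ∈ Icc 1 K, (W k / ∑ t ∈ Icc 1 K, W t) * (∫ ω, F (x k ω) ∂P)) - Fstar ≤ _
  rw [sum_Icc_range, sum_Icc_range]
  have hS : ∑ k ∈ range K, W (k+1) * ((∫ ω, F (x (k+1) ω) ∂P) - Fstar) ≤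
      1 / (2 * (1 - β₁)) * (n * Dinf^2 * Ginf +
        A^2 * ((1 + β₁) / (1 - β₁)) / √(1 - β₂) * (K * G₁)) +
      K * (A / (1 - β₁) * (L / 2 * (A^2 / (1 - β₂) * ((τ:ℝ)^2 * s)))) := by
    have h1 : ∀ k ∈ range K, W (k+1) * ((∫ ω, F (x (k+1) ω) ∂P) - Fstar) ≤
        W (k+1) * (∑ i, ∫ ω, g (k+1) ω i * (x (k+1) ω i - z i) ∂P) +
          A / (1 - β₁) * (L / 2 * (A^2 / (1 - β₂) * ((τ:ℝ)^2 * s))) := by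
      intro k hk
      rw [mem_range] at hk
      have h2 := mul_le_mul_of_nonneg_left (hFk k hk) (w3 k hk.le)
      have h3 := mul_le_mul_of_nonneg_right (w4 k hk.le)
        (by positivity : 0 ≤ L / 2 * (A^2 / (1 - β₂) * ((τ:ℝ)^2 * s)))
      linarith
    refine (sum_le_sum h1).trans ?_
    rw [sum_add_distrib]
    simp only [sum_const, card_range, nsmul_eq_mul]
    linarith
  have hfin := final_alg β₁ (1 - β₂) α L G₁ (n * Dinf^2 * Ginf) τ s K (√(K:ℝ)) _
    (∑ t ∈ range K, W (t+1)) hβ₁ hb2 hα hL0 hG1' (by positivity) (by positivity) hsK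
    (Real.sq_sqrt hK0.le).symm hWpos hS
  refine le_trans (le_of_eq ?_) hfin
  rw [eq_div_iff hZ0.ne', sub_mul]
  simp only [mul_sub]
  rw [sum_sub_distrib, ← sum_mul, mul_comm Fstar]
  congr 1
  rw [sum_mul]
  apply sum_congr rfl
  intro k _
  field_simp
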